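/- Let f, g ∈ k⟨x_1,…,x_d⟩. Then g belongs to the unital subalgebra k[f] of k⟨x_1,…,x_d⟩ generated by f if and only if for every n ≥ 1, every X ∈ M_n(k)^d, every λ ∈ k and every nonzero v ∈ k^n with f(X)v = λv, there exists μ ∈ k with g(X)v = μv (i.e. every eigenvector of f(X) is an eigenvector of g(X)). -/

import Mathlib

/-!
If every eigenvector of `f(X)` is one of `g(X)` for all matrix tuples `X`, the same holds in every
module `M` over the free algebra: compressing the variables to a large enough finite-dimensional
subspace of `M` does not change how `f` and `g` act on a given vector. Apply this to the class of
`1` in the quotient by the left ideal of `f - λ`, which satisfies `f · 1 = λ · 1`: for every `λ`,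
`g` is a scalar modulo that left ideal.

Writing `g = μ₀ + h (f - λ₀)`, the quotient `h` plays the role of a divided difference of `g`. It is
again a scalar modulo the left ideal of `f - λ` for every `λ ≠ λ₀`, and it has smaller degree when
`f` is not a scalar. By induction `h`, and hence `g`, is a polynomial in `f`.
-/

/-- Evaluation of a noncommutative polynomial at a tuple of `n × n` matrices. -/
noncomputable def ncEval {k : Type*} [CommSemiring k] {d n : ℕ}
    (X : Fin d → Matrix (Fin n) (Fin n) k) (f : FreeAlgebra k (Fin d)) :
    Matrix (Fin n) (Fin n) k :=
  FreeAlgebra.lift k X f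

open Polynomial Filter

section Eigenvectors

variable {k V W : Type*} [CommRing k] [AddCommGroup V] [Module k V] [AddCommGroup W] [Module k W]

/-- Every eigenvector of `S` is an eigenvector of `T`. The zero vector is allowed in the definition,
as it satisfies the condition for trivial reasons. -/
def EigenvectorsSubset (S T : Module.End k V) : Prop :=
  ∀ (lam : k) (v : V), S v = lam • v → ∃ mu : k, T v = mu • v

lemma eigenvectorsSubset_of_mem_adjoin {S T : Module.End k V}
    (hT : T ∈ Algebra.adjoin k {S}) : EigenvectorsSubset S T := by
  intro lam v hv
  obtain ⟨p, rfl⟩ := Algebra.adjoin_mem_exists_aeval k S hT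
  exact ⟨p.eval lam, Module.End.aeval_apply_of_mem_apply_eq_smul hv⟩

lemma EigenvectorsSubset.of_conj (e : V ≃ₗ[k] W) {S T : Module.End k V}
    (h : EigenvectorsSubset (e.conjAlgEquiv k S) (e.conjAlgEquiv k T)) :
    EigenvectorsSubset S T := by
  intro lam v hv
  obtain ⟨mu, hmu⟩ := h lam (e v) (by simp [LinearEquiv.conjAlgEquiv_apply, hv])
  exact ⟨mu, e.injective (by simpa [LinearEquiv.conjAlgEquiv_apply] using hmu)⟩

end Eigenvectors

lemma eigenvectorsSubset_of_finite {k A V : Type*} [Field k] [Ring A] [Algebra k A]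
    [AddCommGroup V] [Module k V] [Module.Finite k V] {a b : A}
    (H : ∀ (n : ℕ) (ρ : A →ₐ[k] Module.End k (Fin n → k)), EigenvectorsSubset (ρ a) (ρ b))
    (ρ : A →ₐ[k] Module.End k V) : EigenvectorsSubset (ρ a) (ρ b) :=
  let e := (Module.finBasis k V).equivFun
  .of_conj e (H _ ((e.conjAlgEquiv k).toAlgHom.comp ρ))

section Compression

variable {k σ M : Type*} [CommRing k] [AddCommGroup M] [Module k M] [Module (FreeAlgebra k σ) M]
  [IsScalarTower k (FreeAlgebra k σ) M]

/-- The representation of the free algebra on a subspace `V` of a module `M` in which each variable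
acts as it does on `M`, followed by a linear map `P : M → V` (in practice a projection). -/
noncomputable def compression {V : Submodule k M} (P : M →ₗ[k] V) :
    FreeAlgebra k σ →ₐ[k] Module.End k V :=
  FreeAlgebra.lift k fun i => P ∘ₗ Algebra.lsmul k k M (FreeAlgebra.ι k i) ∘ₗ V.subtype

lemma exists_fg_forall_compression_apply_eq_smul (p : FreeAlgebra k σ) (m : M) :
    ∃ W : Submodule k M, W.FG ∧ ∀ (V : Submodule k M) (P : M →ₗ[k] V), W ≤ V →
      P ∘ₗ V.subtype = .id → ∀ v : V, (v : M) = m → (compression P p v : M) = p • m := by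
  induction p using FreeAlgebra.induction generalizing m with
  | grade0 r =>
    refine ⟨⊥, Submodule.fg_bot, ?_⟩
    rintro V P - - v rfl
    simp
  | grade1 i =>
    refine ⟨k ∙ (FreeAlgebra.ι k i • m), Submodule.fg_span_singleton _, ?_⟩
    rintro V P hWV hP v rfl
    have hmem : FreeAlgebra.ι k i • (v : M) ∈ V := hWV (Submodule.mem_span_singleton_self _)
    simpa [compression] using congrArg Subtype.val (LinearMap.congr_fun hP ⟨_, hmem⟩)
  | mul p q hp hq =>
    obtain ⟨W₁, hW₁, h₁⟩ := hq m
    obtain ⟨W₂, hW₂, h₂⟩ := hp (q • m)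
    refine ⟨W₁ ⊔ W₂, hW₁.sup hW₂, fun V P hWV hP v hv => ?_⟩
    have hqv := h₁ V P (le_sup_left.trans hWV) hP v hv
    rw [map_mul, Module.End.mul_apply, mul_smul]
    exact h₂ V P (le_sup_right.trans hWV) hP _ hqv
  | add p q hp hq =>
    obtain ⟨W₁, hW₁, h₁⟩ := hp m
    obtain ⟨W₂, hW₂, h₂⟩ := hq m
    refine ⟨W₁ ⊔ W₂, hW₁.sup hW₂, fun V P hWV hP v hv => ?_⟩
    rw [map_add, LinearMap.add_apply, Submodule.coe_add, add_smul,
      h₁ V P (le_sup_left.trans hWV) hP v hv, h₂ V P (le_sup_right.trans hWV) hP v hv]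

end Compression

lemma eigenvectorsSubset_lsmul {k σ M : Type*} [Field k] [AddCommGroup M] [Module k M]
    [Module (FreeAlgebra k σ) M] [IsScalarTower k (FreeAlgebra k σ) M] {f g : FreeAlgebra k σ}
    (H : ∀ (n : ℕ) (ρ : FreeAlgebra k σ →ₐ[k] Module.End k (Fin n → k)),
      EigenvectorsSubset (ρ f) (ρ g)) :
    EigenvectorsSubset (Algebra.lsmul k k M f) (Algebra.lsmul k k M g) := by
  intro lam m hm
  obtain ⟨Wf, hWf, hf⟩ := exists_fg_forall_compression_apply_eq_smul f m
  obtain ⟨Wg, hWg, hg⟩ := exists_fg_forall_compression_apply_eq_smul g m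
  let V := Wf ⊔ Wg ⊔ k ∙ m
  have : Module.Finite k V :=
    .of_fg ((hWf.sup hWg).sup (Submodule.fg_span_singleton m))
  obtain ⟨P, hP⟩ := LinearMap.exists_extend (.id : V →ₗ[k] V)
  let v : V := ⟨m, Submodule.mem_sup_right (Submodule.mem_span_singleton_self m)⟩
  have hfv : (compression P f v : M) = f • m :=
    hf V P (le_sup_left.trans le_sup_left) hP v rfl
  have hgv : (compression P g v : M) = g • m :=
    hg V P (le_sup_right.trans le_sup_left) hP v rfl
  obtain ⟨mu, hmu⟩ := eigenvectorsSubset_of_finite H (compression P) lam v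
    (Subtype.ext (hfv.trans hm))
  exact ⟨mu, hgv.symm.trans (congrArg Subtype.val hmu)⟩

lemma EigenvectorsSubset.exists_eq_algebraMap_add_mul_sub {k A : Type*} [CommRing k] [Ring A]
    [Algebra k A] {a b : A} {lam : k}
    (H : EigenvectorsSubset (Algebra.lsmul k k (A ⧸ Ideal.span {a - algebraMap k A lam}) a)
      (Algebra.lsmul k k (A ⧸ Ideal.span {a - algebraMap k A lam}) b)) :
    ∃ (mu : k) (h : A), b = algebraMap k A mu + h * (a - algebraMap k A lam) := by
  have smul_mk_one_eq_iff (c : A) (r : k) :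
      c • (Submodule.Quotient.mk 1 : A ⧸ Ideal.span {a - algebraMap k A lam}) =
        r • Submodule.Quotient.mk 1 ↔
      c - algebraMap k A r ∈ Ideal.span {a - algebraMap k A lam} := by
    rw [← Submodule.Quotient.mk_smul, ← Submodule.Quotient.mk_smul,
      Submodule.Quotient.eq, smul_eq_mul, mul_one, Algebra.smul_def, mul_one]
  obtain ⟨mu, hmu⟩ := H lam (Submodule.Quotient.mk 1)
    ((smul_mk_one_eq_iff a lam).mpr (Ideal.mem_span_singleton_self _))
  obtain ⟨h, hh⟩ := Ideal.mem_span_singleton'.mp ((smul_mk_one_eq_iff b mu).mp hmu)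
  exact ⟨mu, h, by rw [hh, add_sub_cancel]⟩

section Division

variable {k A : Type*} [Field k] [Ring A] [Algebra k A]

lemma eq_algebraMap_add_mul_sub_of_ne {f h₀ h₁ : A} {lam₀ lam₁ mu₀ mu₁ : k} (hne : lam₁ ≠ lam₀)
    (heq : algebraMap k A mu₀ + h₀ * (f - algebraMap k A lam₀) =
      algebraMap k A mu₁ + h₁ * (f - algebraMap k A lam₁)) :
    h₀ = algebraMap k A ((lam₁ - lam₀)⁻¹ * (mu₁ - mu₀)) +
      (lam₁ - lam₀)⁻¹ • (h₁ - h₀) * (f - algebraMap k A lam₁) := by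
  have shift : h₀ * (f - algebraMap k A lam₀) =
      h₀ * (f - algebraMap k A lam₁) + (lam₁ - lam₀) • h₀ := by
    rw [Algebra.smul_def, Algebra.commutes, ← mul_add, map_sub, sub_add_sub_cancel]
  have smul_eq : (lam₁ - lam₀) • h₀ =
      algebraMap k A (mu₁ - mu₀) + (h₁ - h₀) * (f - algebraMap k A lam₁) := by
    rw [shift] at heq
    rw [← sub_eq_zero] at heq ⊢
    rw [map_sub, sub_mul, ← heq]
    abel
  calc
    h₀ = (lam₁ - lam₀)⁻¹ • (lam₁ - lam₀) • h₀ := (inv_smul_smul₀ (sub_ne_zero.mpr hne) h₀).symm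
    _ = _ := by rw [smul_eq, smul_add, map_mul, ← Algebra.smul_def, smul_mul_assoc]

lemma mem_adjoin_singleton_of_eventually_cofinite [Infinite k] {f : A} (deg : A → ℕ)
    (hdeg : ∀ (h : A) (lam mu : k), h ≠ 0 →
      deg h < deg (algebraMap k A mu + h * (f - algebraMap k A lam))) {g : A}
    (hg : ∀ᶠ lam : k in cofinite, ∃ (mu : k) (h : A),
      g = algebraMap k A mu + h * (f - algebraMap k A lam)) :
    g ∈ Algebra.adjoin k {f} := by
  induction hn : deg g using Nat.strong_induction_on generalizing g with
  | _ n ih =>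
  obtain ⟨lam₀, mu₀, h₀, rfl⟩ := hg.exists
  have hh₀ : h₀ ∈ Algebra.adjoin k {f} := by
    rcases eq_or_ne h₀ 0 with rfl | hne
    · exact zero_mem _
    refine ih _ (hn ▸ hdeg h₀ lam₀ mu₀ hne) ?_ rfl
    filter_upwards [hg, eventually_cofinite_ne lam₀] with lam ⟨mu, h, heq⟩ hlam
    exact ⟨_, _, eq_algebraMap_add_mul_sub_of_ne hlam heq⟩
  exact add_mem (algebraMap_mem _ _) (mul_mem hh₀
    (sub_mem (Algebra.self_mem_adjoin_singleton k f) (algebraMap_mem _ _)))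

end Division

section Degree

variable {k σ : Type*} [CommRing k]

/-- Homogenization of noncommutative polynomials: each variable `x` is sent to `x * t`, where the
polynomial variable `t` is central. -/
noncomputable def ncHomogenize : FreeAlgebra k σ →ₐ[k] (FreeAlgebra k σ)[X] :=
  FreeAlgebra.lift k fun i => C (FreeAlgebra.ι k i) * X

lemma eval_one_ncHomogenize (p : FreeAlgebra k σ) : (ncHomogenize p).eval 1 = p := by
  induction p using FreeAlgebra.induction with
  | grade0 r => rw [AlgHom.commutes, Polynomial.algebraMap_apply, eval_C]
  | grade1 i => simp [ncHomogenize]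
  | mul p q hp hq =>
    rw [map_mul, eval, eval₂_mul_noncomm _ _ fun _ => .one_right _, ← eval, ← eval, hp, hq]
  | add p q hp hq => rw [map_add, eval_add, hp, hq]

lemma coeff_zero_ncHomogenize (p : FreeAlgebra k σ) :
    (ncHomogenize p).coeff 0 = algebraMap k _ (FreeAlgebra.algebraMapInv p) := by
  induction p using FreeAlgebra.induction with
  | grade0 r => simp [Polynomial.algebraMap_apply]
  | grade1 i => simp [ncHomogenize, FreeAlgebra.algebraMapInv]
  | mul p q hp hq => simp only [map_mul, mul_coeff_zero, hp, hq]
  | add p q hp hq => simp only [map_add, coeff_add, hp, hq]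

lemma ncHomogenize_injective :
    Function.Injective (ncHomogenize : FreeAlgebra k σ → (FreeAlgebra k σ)[X]) :=
  Function.LeftInverse.injective (g := eval 1) eval_one_ncHomogenize

/-- The total degree of a noncommutative polynomial, that is, the degree of its homogenization in
the central variable. As for `Polynomial.natDegree`, the zero polynomial has degree `0`. -/
noncomputable def ncDegree (p : FreeAlgebra k σ) : ℕ :=
  (ncHomogenize p).natDegree

lemma ncDegree_mul [NoZeroDivisors k] {p q : FreeAlgebra k σ} (hp : p ≠ 0) (hq : q ≠ 0) :
    ncDegree (p * q) = ncDegree p + ncDegree q := by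
  have ncHomogenize_ne_zero {r : FreeAlgebra k σ} : r ≠ 0 → ncHomogenize r ≠ 0 :=
    (map_ne_zero_iff _ ncHomogenize_injective).mpr
  rw [ncDegree, map_mul, natDegree_mul (ncHomogenize_ne_zero hp) (ncHomogenize_ne_zero hq)]
  rfl

lemma ncDegree_algebraMap_add (r : k) (p : FreeAlgebra k σ) :
    ncDegree (algebraMap k _ r + p) = ncDegree p := by
  rw [ncDegree, map_add, AlgHom.commutes, Polynomial.algebraMap_apply, natDegree_C_add, ncDegree]

lemma ncDegree_sub_algebraMap (p : FreeAlgebra k σ) (r : k) :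
    ncDegree (p - algebraMap k _ r) = ncDegree p := by
  rw [sub_eq_neg_add, ← map_neg, ncDegree_algebraMap_add]

lemma mem_range_algebraMap_of_ncDegree_eq_zero {p : FreeAlgebra k σ} (hp : ncDegree p = 0) :
    p ∈ Set.range (algebraMap k (FreeAlgebra k σ)) := by
  refine ⟨FreeAlgebra.algebraMapInv p, ?_⟩
  calc
    algebraMap k _ (FreeAlgebra.algebraMapInv p) = (C ((ncHomogenize p).coeff 0)).eval 1 := by
      rw [eval_C, coeff_zero_ncHomogenize]
    _ = p := by rw [← eq_C_of_natDegree_eq_zero hp, eval_one_ncHomogenize]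

lemma ncDegree_lt_ncDegree_algebraMap_add_mul_sub [NoZeroDivisors k] {f : FreeAlgebra k σ}
    (hf : f ∉ Set.range (algebraMap k (FreeAlgebra k σ))) (h : FreeAlgebra k σ) (lam mu : k)
    (hh : h ≠ 0) : ncDegree h < ncDegree (algebraMap k _ mu + h * (f - algebraMap k _ lam)) := by
  have hflam : f - algebraMap k _ lam ≠ 0 := fun h => hf ⟨lam, (sub_eq_zero.mp h).symm⟩
  have hpos : 0 < ncDegree f :=
    Nat.pos_of_ne_zero (mt mem_range_algebraMap_of_ncDegree_eq_zero hf)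
  rw [ncDegree_algebraMap_add, ncDegree_mul hh hflam, ncDegree_sub_algebraMap]
  lia

end Degree

lemma mem_adjoin_singleton_iff_forall_eigenvectorsSubset {k σ : Type*} [Field k] [Infinite k]
    {f g : FreeAlgebra k σ} :
    g ∈ Algebra.adjoin k {f} ↔
      ∀ (n : ℕ) (ρ : FreeAlgebra k σ →ₐ[k] Module.End k (Fin n → k)),
        EigenvectorsSubset (ρ f) (ρ g) := by
  refine ⟨fun hg n ρ => eigenvectorsSubset_of_mem_adjoin ?_, fun H => ?_⟩
  · rw [← AlgHom.map_adjoin_singleton]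
    exact ⟨g, hg, rfl⟩
  · have scalar_mod (lam : k) :
        ∃ (mu : k) (h : FreeAlgebra k σ),
          g = algebraMap k _ mu + h * (f - algebraMap k _ lam) :=
      (eigenvectorsSubset_lsmul H).exists_eq_algebraMap_add_mul_sub
    by_cases hf : f ∈ Set.range (algebraMap k (FreeAlgebra k σ))
    · obtain ⟨r, rfl⟩ := hf
      obtain ⟨mu, h, rfl⟩ := scalar_mod r
      rw [sub_self, mul_zero, add_zero]
      exact algebraMap_mem _ mu
    · exact mem_adjoin_singleton_of_eventually_cofinite ncDegree
        (ncDegree_lt_ncDegree_algebraMap_add_mul_sub hf) (.of_forall scalar_mod)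

lemma eigenvectorsSubset_toLinAlgEquiv'_iff {k n : Type*} [CommRing k] [Fintype n] [DecidableEq n]
    {S T : Matrix n n k} :
    EigenvectorsSubset (Matrix.toLinAlgEquiv' S) (Matrix.toLinAlgEquiv' T) ↔
      ∀ (lam : k) (v : n → k), v ≠ 0 → S.mulVec v = lam • v → ∃ mu : k, T.mulVec v = mu • v := by
  refine ⟨fun h lam v _ => h lam v, fun h lam v hv => ?_⟩
  rcases eq_or_ne v 0 with rfl | hv0
  · exact ⟨0, by rw [map_zero, smul_zero]⟩
  · exact h lam v hv0 hv

lemma exists_toLinAlgEquiv'_comp_lift_eq {k σ n : Type*} [CommRing k] [Fintype n] [DecidableEq n]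
    (ρ : FreeAlgebra k σ →ₐ[k] Module.End k (n → k)) :
    ∃ X : σ → Matrix n n k,
      Matrix.toLinAlgEquiv'.toAlgHom.comp (FreeAlgebra.lift k X) = ρ := by
  refine ⟨fun i => LinearMap.toMatrixAlgEquiv' (ρ (FreeAlgebra.ι k i)), ?_⟩
  ext1
  funext i
  simp

theorem eigenvector_nullstellensatz_general {k σ : Type*} [Field k] [Infinite k]
    (f g : FreeAlgebra k σ) :
    g ∈ Algebra.adjoin k {f} ↔
      ∀ n : ℕ, 1 ≤ n → ∀ (X : σ → Matrix (Fin n) (Fin n) k) (lam : k) (v : Fin n → k), v ≠ 0 →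
        (FreeAlgebra.lift k X f).mulVec v = lam • v →
        ∃ mu : k, (FreeAlgebra.lift k X g).mulVec v = mu • v := by
  rw [mem_adjoin_singleton_iff_forall_eigenvectorsSubset]
  constructor
  · intro H n _ X
    exact eigenvectorsSubset_toLinAlgEquiv'_iff.mp
      (H n (Matrix.toLinAlgEquiv'.toAlgHom.comp (FreeAlgebra.lift k X)))
  · intro H n ρ
    obtain ⟨X, rfl⟩ := exists_toLinAlgEquiv'_comp_lift_eq ρ
    refine eigenvectorsSubset_toLinAlgEquiv'_iff.mpr fun lam v hv => H n ?_ X lam v hv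
    exact Nat.one_le_iff_ne_zero.mpr fun hn => hv (by subst hn; exact Subsingleton.elim v 0)

/-- `g` is a polynomial in `f` (i.e. `g ∈ k[f]`) if and only if at every matrix
tuple `X` every eigenvector of `f(X)` is an eigenvector of `g(X)`. -/
theorem eigenvector_nullstellensatz
    (k : Type*) [Field k] [IsAlgClosed k] [CharZero k]
    (d : ℕ) (hd : 1 ≤ d) (f g : FreeAlgebra k (Fin d)) :
    g ∈ Algebra.adjoin k ({f} : Set (FreeAlgebra k (Fin d))) ↔
      (∀ (n : ℕ), 1 ≤ n → ∀ X : Fin d → Matrix (Fin n) (Fin n) k,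
        ∀ (lam : k) (v : Fin n → k), v ≠ 0 → (ncEval X f).mulVec v = lam • v →
        ∃ mu : k, (ncEval X g).mulVec v = mu • v) :=
  eigenvector_nullstellensatz_general f g
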